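/- arXiv:0802.2554 — 2 statements merged into one kernel-verified Lean document; each statement's English description precedes it below -/
import Mathlib

section
/- Every contracting self-similar group G ≤ Aut(X^*) has no free non-abelian subgroup. -/
/-! The rooted tree `X^*` of finite words over a fixed alphabet `X`, realized via its
boundary `X^ω = ℕ → X`; automorphisms, restrictions, self-similar and contracting groups. -/

/-- A permutation of the boundary `X^ω = ℕ → X` is (induced by) an automorphism of the
rooted tree `X^*` iff for all `n` it preserves the relation "agree on the first `n`
letters" (two sequences have the same length-`n` beginning iff their images do). -/
def IsTreeAut {X : Type*} (f : Equiv.Perm (ℕ → X)) : Prop :=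
  ∀ (n : ℕ) (w w' : ℕ → X),
    (∀ i, i < n → w i = w' i) ↔ (∀ i, i < n → f w i = f w' i)

/-- The automorphism group `Aut X^*` of the rooted tree `X^*`, realized as the group of
those permutations of the boundary `X^ω` induced by tree automorphisms. -/
def treeAut (X : Type*) : Subgroup (Equiv.Perm (ℕ → X)) where
  carrier := {f | IsTreeAut f}
  one_mem' := by intro n w w'; simp
  mul_mem' := by
    intro f g hf hg n w w'
    have h := (hg n w w').trans (hf n (g w) (g w'))
    simpa using h
  inv_mem' := by
    intro f hf n w w'
    have h := (hf n (f⁻¹ w) (f⁻¹ w')).symm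
    simpa using h

/-- The concatenation `v·u ∈ X^ω` of a finite word `v ∈ X^m` and a sequence `u ∈ X^ω`. -/
def wappend {X : Type*} {m : ℕ} (v : Fin m → X) (u : ℕ → X) : ℕ → X :=
  fun i => if h : i < m then v ⟨i, h⟩ else u (i - m)

/-- The underlying function of the restriction `f|_v`: it sends `u` to the sequence with
`v·u ↦ (f v)·(f|_v u)`, i.e. `(f|_v u) j` is letter `m + j` of `f (v·u)`. -/
def restrictFun {X : Type*} (f : Equiv.Perm (ℕ → X)) {m : ℕ} (v : Fin m → X) :
    (ℕ → X) → (ℕ → X) :=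
  fun u j => f (wappend v u) (m + j)

open scoped Classical in
/-- The restriction (section, state) `f|_v` of `f` at the vertex `v ∈ X^*`: the unique
automorphism of `X^*` with `f (v·u) = (f v)·(f|_v u)` for all `u`.  (For `f` a tree
automorphism the underlying function `restrictFun f v` is bijective, and `f|_v` is the
corresponding permutation of the boundary.) -/
noncomputable def restrictPerm {X : Type*} (f : Equiv.Perm (ℕ → X)) {m : ℕ}
    (v : Fin m → X) : Equiv.Perm (ℕ → X) :=
  if h : Function.Bijective (restrictFun f v) then Equiv.ofBijective _ h else 1

/-- A group `G` of permutations of the boundary is self-similar if it is closed under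
taking restrictions. -/
def SelfSimilar {X : Type*} (G : Subgroup (Equiv.Perm (ℕ → X))) : Prop :=
  ∀ g ∈ G, ∀ (m : ℕ) (v : Fin m → X), restrictPerm g v ∈ G

/-- The (self-similar) group `G` is contracting with the finite set `N ⊆ G`: for every
`g ∈ G` there is `n` such that `g|_v ∈ N` for all words `v` of length greater than `n`. -/
def IsContractingWith {X : Type*} (G : Subgroup (Equiv.Perm (ℕ → X)))
    (N : Finset (Equiv.Perm (ℕ → X))) : Prop :=
  (N : Set (Equiv.Perm (ℕ → X))) ⊆ (G : Set (Equiv.Perm (ℕ → X))) ∧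
    ∀ g ∈ G, ∃ n : ℕ, ∀ (m : ℕ) (v : Fin m → X), n < m → restrictPerm g v ∈ N

/-! Nontrivial subgroups of a free group whose normalizers have finite index intersect
nontrivially: on finite-index subgroups they normalize each other, so a commutator of nontrivial
elements lies in both, and commuting elements of a free group have a common power.

Let `F` be a free subgroup of a contracting group. If every boundary point had a nontrivial
stabilizer in `F`, then, since an element fixing a point has a restriction of finite order there,
every point would have a cylinder neighbourhood with nontrivial pointwise stabilizer. Finitely many
such cylinders cover the boundary and have finite orbits, so some nontrivial element of `F` would
act trivially. Hence some point has trivial stabilizer. But a positive word of length `2 ^ k` is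
determined on a given point by a beginning of length `O(k)` and one of boundedly many restrictions,
so if `F` has rank at least two, then for large `k` two of the `2 ^ 2 ^ k` positive words must move
that point to the same place. -/

section FreeGroup

open Subgroup

theorem injective_prod_map_freeGroup_of (α : Type*) :
    Function.Injective fun l : List α => (l.map FreeGroup.of).prod := by
  classical
  have hword : ∀ l : List α,
      ((l.map FreeGroup.of).prod).toWord = l.map fun a => (a, true) := by
    intro l
    induction l with
    | nil => simp
    | cons a l ih =>
      rw [List.map_cons, List.prod_cons, FreeGroup.toWord_mul, ih,
        FreeGroup.IsReduced.reduce_eq]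
      · simp
      · rw [FreeGroup.toWord_of, FreeGroup.IsReduced, List.singleton_append,
          ← List.map_cons (f := fun a => (a, true)), List.isChain_map]
        exact List.Pairwise.isChain (List.pairwise_of_forall (by simp))
  intro l l' h
  have hmap : l.map (fun a => (a, true)) = l'.map fun a => (a, true) := by
    rw [← hword, ← hword]
    exact congrArg FreeGroup.toWord h
  exact List.map_injective_iff.2 (fun a b hab => congrArg Prod.fst hab) hmap

theorem eq_of_commute_freeGroup_of {α : Type*} {i j : α}
    (h : Commute (FreeGroup.of i) (FreeGroup.of j)) : i = j := by
  have hword : [i, j] = [j, i] := injective_prod_map_freeGroup_of α (by simpa using h.eq)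
  exact List.head_eq_of_cons_eq hword

theorem inf_ne_bot_of_finiteIndex {G : Type*} [Group G] [IsMulTorsionFree G] {A H : Subgroup G}
    (hA : A ≠ ⊥) [H.FiniteIndex] : A ⊓ H ≠ ⊥ := by
  obtain ⟨x, hxA, hx⟩ := A.bot_or_exists_ne_one.resolve_left hA
  obtain ⟨n, hn, -, hxH⟩ := exists_pow_mem_of_index_ne_zero H.index_ne_zero_of_finite x
  intro h
  have hxn : x ^ n = 1 := (eq_bot_iff_forall _).1 h _ ⟨A.pow_mem hxA n, hxH⟩
  exact hx ((pow_eq_one_iff_left hn.ne').1 hxn)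

variable {G : Type*} [Group G] [IsFreeGroup G]

variable (G) in
theorem isMulTorsionFree_of_isFreeGroup : IsMulTorsionFree G :=
  (IsFreeGroup.toFreeGroup G).injective.isMulTorsionFree (IsFreeGroup.toFreeGroup G).toMonoidHom

theorem isCyclic_of_isFreeGroup [IsMulCommutative G] : IsCyclic G := by
  obtain ⟨ι, ⟨b⟩⟩ := IsFreeGroup.nonempty_basis (G := G)
  have : Subsingleton ι := ⟨fun i j => eq_of_commute_freeGroup_of <| by
    simpa using (show Commute (b i) (b j) from mul_comm' _ _).map b.repr⟩
  have : IsCyclic (FreeGroup ι) := by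
    cases isEmpty_or_nonempty ι
    · infer_instance
    · have := uniqueOfSubsingleton (Classical.arbitrary ι)
      infer_instance
  exact b.repr.isCyclic.2 this

theorem exists_mem_zpowers_of_commute {x y : G} (h : Commute x y) :
    ∃ z, x ∈ zpowers z ∧ y ∈ zpowers z := by
  have : IsMulCommutative (closure {x, y}) :=
    isMulCommutative_closure (by simp [h.eq])
  obtain ⟨⟨z, _⟩, hz⟩ := isCyclic_of_isFreeGroup (G := closure {x, y})
  have hmem : ∀ u ∈ closure {x, y}, u ∈ zpowers z := fun u hu => by
    obtain ⟨n, hn⟩ := hz ⟨u, hu⟩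
    exact ⟨n, congrArg Subtype.val hn⟩
  exact ⟨z, hmem x (subset_closure (by simp)), hmem y (subset_closure (by simp))⟩

variable {A B : Subgroup G}

theorem inf_ne_bot_of_le_normalizer (hA : A ≠ ⊥) (hB : B ≠ ⊥)
    (hAB : A ≤ normalizer B) (hBA : B ≤ normalizer A) : A ⊓ B ≠ ⊥ := by
  obtain ⟨x, hxA, hx⟩ := A.bot_or_exists_ne_one.resolve_left hA
  obtain ⟨y, hyB, hy⟩ := B.bot_or_exists_ne_one.resolve_left hB
  intro hbot
  have heq_one : ∀ u, u ∈ A → u ∈ B → u = 1 := fun u huA huB =>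
    (eq_bot_iff_forall _).1 hbot u ⟨huA, huB⟩
  -- The commutator of `x` and `y` lies in both `A` and `B`.
  have hxy : Commute x y := by
    have hconj : y * x⁻¹ * y⁻¹ ∈ A := le_normalizer_iff.1 hBA y hyB x⁻¹ (A.inv_mem hxA)
    rw [← commutatorElement_eq_one_iff_commute]
    refine heq_one _ ?_ (B.mul_mem (le_normalizer_iff.1 hAB x hxA y hyB) (B.inv_mem hyB))
    simpa [commutatorElement_def, mul_assoc] using A.mul_mem hxA hconj
  obtain ⟨z, ⟨m, rfl⟩, ⟨n, rfl⟩⟩ := exists_mem_zpowers_of_commute hxy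
  have hpow : (z ^ m) ^ n = 1 :=
    heq_one _ (A.zpow_mem hxA n) (zpow_comm z m n ▸ B.zpow_mem hyB m)
  have := isMulTorsionFree_of_isFreeGroup G
  rcases IsMulTorsionFree.zpow_eq_one_iff.1 hpow with hz | rfl
  · exact hx hz
  · exact hy (zpow_zero z)

theorem inf_ne_bot_of_finiteIndex_normalizer (hA : A ≠ ⊥) (hB : B ≠ ⊥)
    [(normalizer (A : Set G)).FiniteIndex] [(normalizer (B : Set G)).FiniteIndex] :
    A ⊓ B ≠ ⊥ := by
  have := isMulTorsionFree_of_isFreeGroup G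
  refine ne_bot_of_le_ne_bot (b := (A ⊓ normalizer B) ⊓ (B ⊓ normalizer A)) ?_
    (inf_le_inf inf_le_left inf_le_left)
  have hle : ∀ C D : Subgroup G,
      C ⊓ normalizer D ≤ normalizer (D ⊓ normalizer C : Subgroup G) := fun C D =>
    (le_inf inf_le_right (inf_le_left.trans (le_normalizer.trans le_normalizer))).trans
      inf_normalizer_le_normalizer_inf
  exact inf_ne_bot_of_le_normalizer (inf_ne_bot_of_finiteIndex hA)
    (inf_ne_bot_of_finiteIndex hB) (hle A B) (hle B A)

theorem iInf_ne_bot_of_finiteIndex_normalizer [Nontrivial G] {ι : Type*} [Finite ι]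
    {K : ι → Subgroup G} (hK : ∀ i, K i ≠ ⊥)
    (hnorm : ∀ i, (normalizer (K i : Set G)).FiniteIndex) : ⨅ i, K i ≠ ⊥ := by
  have hfinite : ∀ s : Set ι, s.Finite → ⨅ i ∈ s, K i ≠ ⊥ := by
    intro s hs
    induction s, hs using Set.Finite.induction_on with
    | empty => simp
    | @insert i s _ hs ih =>
      have := hs.to_subtype
      have : (normalizer ((⨅ j ∈ s, K j : Subgroup G) : Set G)).FiniteIndex := by
        rw [iInf_subtype']
        have := finiteIndex_iInf fun j : s => hnorm j
        exact finiteIndex_of_le (iInf_normalizer_le_normalizer_iInf fun j : s => K j)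
      have := hnorm i
      rw [iInf_insert]
      exact inf_ne_bot_of_finiteIndex_normalizer (hK i) ih
  simpa using hfinite _ Set.finite_univ

end FreeGroup

section MulAction

open MulAction Subgroup
open scoped Pointwise

variable {G α : Type*} [Group G] [MulAction G α]

theorem fixingSubgroup_univ_eq_bot [FaithfulSMul G α] :
    fixingSubgroup G (Set.univ : Set α) = ⊥ :=
  (eq_bot_iff_forall _).2 fun g hg => FaithfulSMul.eq_of_smul_eq_smul fun a : α => by
    rw [(mem_fixingSubgroup_iff G).1 hg a (Set.mem_univ a), one_smul]

theorem stabilizer_le_normalizer_fixingSubgroup (U : Set α) :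
    stabilizer G U ≤ normalizer (fixingSubgroup G U : Set G) := by
  rw [le_normalizer_iff]
  intro g hg h hh
  rw [mem_fixingSubgroup_iff] at hh ⊢
  intro a ha
  rw [mul_smul, mul_smul, hh _ ((mem_stabilizer_set.1 (inv_mem hg) a).2 ha), smul_inv_smul]

theorem finiteIndex_stabilizer_of_finite_orbit {a : α} (h : (orbit G a).Finite) :
    (stabilizer G a).FiniteIndex :=
  ⟨by rw [index_stabilizer]; exact ((Set.ncard_pos h).2 (nonempty_orbit a)).ne'⟩

theorem fixingSubgroup_iUnion_ne_bot [IsFreeGroup G] [Nontrivial G] {ι : Type*} [Finite ι]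
    {U : ι → Set α} (horbit : ∀ i, (orbit G (U i)).Finite)
    (hU : ∀ i, fixingSubgroup G (U i) ≠ ⊥) : fixingSubgroup G (⋃ i, U i) ≠ ⊥ := by
  rw [fixingSubgroup_iUnion]
  refine iInf_ne_bot_of_finiteIndex_normalizer hU fun i => ?_
  have := finiteIndex_stabilizer_of_finite_orbit (horbit i)
  exact finiteIndex_of_le (stabilizer_le_normalizer_fixingSubgroup (U i))

end MulAction

section Restriction

open MulAction PiNat
open scoped Pointwise

variable {X : Type*}

/-- The beginning of length `m` of the sequence `w`, a vertex of the tree on the path to `w`. -/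
def wtake (m : ℕ) (w : ℕ → X) : Fin m → X := fun i => w i

/-- The sequence left after the first `m` letters of `w` are removed; it is the point of the
boundary on which the restriction at `wtake m w` acts. -/
def wdrop (m : ℕ) (w : ℕ → X) : ℕ → X := fun j => w (m + j)

theorem wtake_eq_wtake_iff {m : ℕ} {w w' : ℕ → X} :
    wtake m w = wtake m w' ↔ ∀ i < m, w i = w' i := by
  simp [funext_iff, wtake, Fin.forall_iff]

theorem mem_cylinder_iff_wtake_eq {m : ℕ} {w u : ℕ → X} :
    u ∈ cylinder w m ↔ wtake m u = wtake m w :=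
  wtake_eq_wtake_iff.symm

theorem eq_of_wtake_eq_of_wdrop_eq {m : ℕ} {w w' : ℕ → X} (htake : wtake m w = wtake m w')
    (hdrop : wdrop m w = wdrop m w') : w = w' := by
  funext i
  rcases lt_or_ge i m with hi | hi
  · exact wtake_eq_wtake_iff.1 htake i hi
  · simpa [wdrop, hi] using congrFun hdrop (i - m)

theorem wtake_add_eq_wtake_add_iff {m n : ℕ} {w w' : ℕ → X} :
    wtake (m + n) w = wtake (m + n) w' ↔
      wtake m w = wtake m w' ∧ wtake n (wdrop m w) = wtake n (wdrop m w') := by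
  simp only [funext_iff, wtake, wdrop, Fin.forall_fin_add, Fin.val_castAdd, Fin.val_natAdd]

theorem wdrop_zero (w : ℕ → X) : wdrop 0 w = w :=
  funext fun j => congrArg w (zero_add j)

theorem wdrop_wdrop (m n : ℕ) (w : ℕ → X) : wdrop n (wdrop m w) = wdrop (m + n) w :=
  funext fun j => congrArg w (add_assoc m n j).symm

@[simp]
theorem wtake_wappend {m : ℕ} (v : Fin m → X) (u : ℕ → X) : wtake m (wappend v u) = v :=
  funext fun i => by simp [wtake, wappend]

@[simp]
theorem wdrop_wappend {m : ℕ} (v : Fin m → X) (u : ℕ → X) : wdrop m (wappend v u) = u :=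
  funext fun j => by simp [wdrop, wappend]

theorem wappend_wtake_wdrop (m : ℕ) (w : ℕ → X) : wappend (wtake m w) (wdrop m w) = w :=
  eq_of_wtake_eq_of_wdrop_eq (wtake_wappend _ _) (wdrop_wappend _ _)

namespace IsTreeAut

variable {g h : Equiv.Perm (ℕ → X)} {m : ℕ}

theorem wtake_eq_iff (hg : IsTreeAut g) {w w' : ℕ → X} :
    wtake m (g w) = wtake m (g w') ↔ wtake m w = wtake m w' := by
  simpa only [wtake_eq_wtake_iff] using (hg m w w').symm

theorem bijective_restrictFun (hg : IsTreeAut g) (v : Fin m → X) :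
    Function.Bijective (restrictFun g v) := by
  constructor
  · intro u u' huu'
    have happ : g (wappend v u) = g (wappend v u') :=
      eq_of_wtake_eq_of_wdrop_eq (hg.wtake_eq_iff.2 (by simp)) huu'
    simpa using congrArg (wdrop m) (g.injective happ)
  · intro y
    obtain ⟨z, hz⟩ := g.surjective (wappend (wtake m (g (wappend v y))) y)
    have hzv : wtake m z = v := by
      rw [← wtake_wappend v y, ← hg.wtake_eq_iff, hz, wtake_wappend]
    refine ⟨wdrop m z, ?_⟩
    change wdrop m (g (wappend v (wdrop m z))) = y
    rw [← hzv, wappend_wtake_wdrop, hz, wdrop_wappend]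

theorem restrictPerm_apply (hg : IsTreeAut g) (v : Fin m → X) (u : ℕ → X) :
    restrictPerm g v u = wdrop m (g (wappend v u)) := by
  rw [restrictPerm, dif_pos (hg.bijective_restrictFun v)]
  rfl

theorem wdrop_apply (hg : IsTreeAut g) (m : ℕ) (w : ℕ → X) :
    wdrop m (g w) = restrictPerm g (wtake m w) (wdrop m w) := by
  rw [hg.restrictPerm_apply, wappend_wtake_wdrop]

theorem restrictPerm_eq_of_wdrop_apply (hg : IsTreeAut g) {v : Fin m → X}
    {σ : Equiv.Perm (ℕ → X)} (hσ : ∀ w, wtake m w = v → wdrop m (g w) = σ (wdrop m w)) :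
    restrictPerm g v = σ :=
  Equiv.ext fun u => by
    rw [hg.restrictPerm_apply, hσ _ (wtake_wappend v u), wdrop_wappend]

theorem isTreeAut_restrictPerm (hg : IsTreeAut g) (v : Fin m → X) :
    IsTreeAut (restrictPerm g v) := by
  intro n u u'
  have htree := hg.wtake_eq_iff (m := m + n) (w := wappend v u) (w' := wappend v u')
  have hbeginning : wtake m (g (wappend v u)) = wtake m (g (wappend v u')) :=
    hg.wtake_eq_iff.2 (by simp)
  simp only [wtake_add_eq_wtake_add_iff, hbeginning, wtake_wappend, wdrop_wappend, true_and,
    ← hg.restrictPerm_apply] at htree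
  simpa only [wtake_eq_wtake_iff] using htree.symm

theorem restrictPerm_zero (hg : IsTreeAut g) (v : Fin 0 → X) : restrictPerm g v = g :=
  hg.restrictPerm_eq_of_wdrop_apply fun w _ => by rw [wdrop_zero, wdrop_zero]

theorem restrictPerm_mul (hg : IsTreeAut g) (hh : IsTreeAut h) (w : ℕ → X) :
    restrictPerm (g * h) (wtake m w) =
      restrictPerm g (wtake m (h w)) * restrictPerm h (wtake m w) :=
  restrictPerm_eq_of_wdrop_apply ((treeAut X).mul_mem hg hh) fun w' hw' => by
    rw [Equiv.Perm.mul_apply, Equiv.Perm.mul_apply, hg.wdrop_apply, hh.wdrop_apply,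
      hh.wtake_eq_iff.2 hw', hw']

theorem restrictPerm_pow (hg : IsTreeAut g) {w : ℕ → X} (hw : g w = w) (k : ℕ) :
    restrictPerm (g ^ k) (wtake m w) = restrictPerm g (wtake m w) ^ k := by
  induction k with
  | zero => exact restrictPerm_eq_of_wdrop_apply (treeAut X).one_mem fun _ _ => rfl
  | succ k ih =>
    rw [pow_succ, pow_succ, restrictPerm_mul ((treeAut X).pow_mem hg k) hg, hw, ih]

theorem restrictPerm_add (hg : IsTreeAut g) (m n : ℕ) (w : ℕ → X) :
    restrictPerm g (wtake (m + n) w) =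
      restrictPerm (restrictPerm g (wtake m w)) (wtake n (wdrop m w)) :=
  hg.restrictPerm_eq_of_wdrop_apply fun w' hw' => by
    obtain ⟨htake, hdrop⟩ := wtake_add_eq_wtake_add_iff.1 hw'
    rw [← wdrop_wdrop, ← wdrop_wdrop, hg.wdrop_apply,
      (hg.isTreeAut_restrictPerm _).wdrop_apply, htake, hdrop]

theorem eq_of_restrictPerm_eq (hg : IsTreeAut g) (hh : IsTreeAut h) {w u : ℕ → X}
    (hw : wtake m (g w) = wtake m (h w))
    (hres : restrictPerm g (wtake m w) = restrictPerm h (wtake m w))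
    (hu : u ∈ cylinder w m) : g u = h u := by
  rw [mem_cylinder_iff_wtake_eq] at hu
  refine eq_of_wtake_eq_of_wdrop_eq (m := m) ?_ ?_
  · rw [hg.wtake_eq_iff.2 hu, hh.wtake_eq_iff.2 hu, hw]
  · rw [hg.wdrop_apply, hh.wdrop_apply, hu, hres]

theorem smul_cylinder (hg : IsTreeAut g) (w : ℕ → X) (m : ℕ) :
    g • cylinder w m = cylinder (g w) m := by
  ext u
  rw [Set.mem_smul_set_iff_inv_smul_mem, mem_cylinder_iff_wtake_eq, mem_cylinder_iff_wtake_eq,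
    ← hg.wtake_eq_iff, ← Equiv.Perm.smul_def g (_ • _), smul_inv_smul]

end IsTreeAut

theorem finite_range_cylinder [Finite X] (m : ℕ) :
    (Set.range fun w : ℕ → X => cylinder w m).Finite := by
  refine (Set.finite_range fun v : Fin m → X => {u | wtake m u = v}).subset ?_
  rintro _ ⟨w, rfl⟩
  exact ⟨wtake m w, Set.ext fun u => mem_cylinder_iff_wtake_eq.symm⟩

theorem finite_orbit_cylinder [Finite X] {F : Subgroup (Equiv.Perm (ℕ → X))}
    (hF : F ≤ treeAut X) (w : ℕ → X) (m : ℕ) : (orbit F (cylinder w m)).Finite := by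
  refine (finite_range_cylinder m).subset ?_
  rintro _ ⟨g, rfl⟩
  exact ⟨g.1 w, (IsTreeAut.smul_cylinder (hF g.2) w m).symm⟩

theorem exists_finset_iUnion_cylinder_eq_univ [Finite X] (m : (ℕ → X) → ℕ) :
    ∃ t : Finset (ℕ → X), ⋃ w : t, cylinder (w : ℕ → X) (m w) = Set.univ := by
  let : TopologicalSpace X := ⊥
  have : DiscreteTopology X := ⟨rfl⟩
  obtain ⟨t, ht⟩ := isCompact_univ.elim_finite_subcover (fun w : ℕ → X => cylinder w (m w))
    (fun w => isOpen_cylinder _ w (m w))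
    (fun w _ => Set.mem_iUnion.2 ⟨w, self_mem_cylinder w (m w)⟩)
  exact ⟨t, by simpa [Set.iUnion_subtype] using Set.univ_subset_iff.1 ht⟩

end Restriction

theorem exists_mul_add_lt_two_pow (a c : ℕ) : ∃ k, c * k + a < 2 ^ k := by
  obtain ⟨j, hac⟩ : ∃ j, j = a + 2 * c := ⟨_, rfl⟩
  refine ⟨2 * j, ?_⟩
  have hj : j + 1 ≤ 2 ^ j := Nat.lt_two_pow_self
  calc c * (2 * j) + a < (j + 1) * (j + 1) := by
        have hsq : j * j = a * j + c * (2 * j) := by rw [hac]; ring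
        nlinarith [Nat.zero_le (a * j)]
    _ ≤ 2 ^ j * 2 ^ j := Nat.mul_le_mul hj hj
    _ = 2 ^ (2 * j) := by rw [two_mul, pow_add]

theorem exists_pow_mul_lt_pow_two_pow (a b m : ℕ) {c : ℕ} (hc : 1 < c) :
    ∃ k, b ^ (k * m) * a < c ^ 2 ^ k := by
  obtain ⟨k, hk⟩ := exists_mul_add_lt_two_pow a (b * m)
  refine ⟨k, ?_⟩
  calc b ^ (k * m) * a ≤ (2 ^ b) ^ (k * m) * 2 ^ a :=
        Nat.mul_le_mul (Nat.pow_le_pow_left Nat.lt_two_pow_self.le _) Nat.lt_two_pow_self.le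
    _ = 2 ^ (b * m * k + a) := by rw [← pow_mul, ← pow_add]; ring_nf
    _ < 2 ^ 2 ^ k := Nat.pow_lt_pow_right one_lt_two hk
    _ ≤ c ^ 2 ^ k := Nat.pow_le_pow_left hc _

section Contracting

open MulAction PiNat Subgroup

namespace IsContractingWith

variable {X : Type*} {G F : Subgroup (Equiv.Perm (ℕ → X))} {N : Finset (Equiv.Perm (ℕ → X))}

theorem exists_depth (hN : IsContractingWith G N) {s : Set (Equiv.Perm (ℕ → X))}
    (hs : s.Finite) (hsG : s ⊆ G) :
    ∃ m, ∀ g ∈ s, ∀ v : Fin m → X, restrictPerm g v ∈ N := by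
  choose! d hd using hN.2
  obtain ⟨m, hm⟩ := (hs.image d).bddAbove
  exact ⟨m + 1, fun g hg v => hd g (hsG hg) _ v
    (Nat.lt_succ_of_le (hm (Set.mem_image_of_mem d hg)))⟩

theorem exists_isOfFinOrder_restrictPerm (hG : G ≤ treeAut X) (hN : IsContractingWith G N)
    {g : Equiv.Perm (ℕ → X)} (hg : g ∈ G) {w : ℕ → X} (hw : g w = w) :
    ∃ m, IsOfFinOrder (restrictPerm g (wtake m w)) := by
  obtain ⟨m, hm⟩ := hN.exists_depth ((Set.finite_Iic N.card).image (g ^ ·))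
    (Set.image_subset_iff.2 fun k _ => G.pow_mem hg k)
  have hmem : ∀ k ≤ N.card, restrictPerm g (wtake m w) ^ k ∈ N := fun k hk =>
    (hG hg).restrictPerm_pow hw k ▸ hm _ ⟨k, hk, rfl⟩ _
  refine ⟨m, not_not.1 fun hinf => ?_⟩
  have hcard := Finset.card_le_card_of_injOn (s := Finset.range (N.card + 1)) (t := N)
    (restrictPerm g (wtake m w) ^ ·) (fun k hk => hmem k (Finset.mem_range_succ_iff.1 hk))
    (injective_pow_iff_not_isOfFinOrder.2 hinf).injOn
  rw [Finset.card_range] at hcard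
  exact Nat.not_succ_le_self _ hcard

theorem exists_pow_mem_fixingSubgroup (hG : G ≤ treeAut X) (hN : IsContractingWith G N)
    {g : Equiv.Perm (ℕ → X)} (hg : g ∈ G) {w : ℕ → X} (hw : g w = w) :
    ∃ n ≠ 0, ∃ m, g ^ n ∈ fixingSubgroup (Equiv.Perm (ℕ → X)) (cylinder w m) := by
  obtain ⟨m, hm⟩ := hN.exists_isOfFinOrder_restrictPerm hG hg hw
  obtain ⟨n, hn, hpow⟩ := isOfFinOrder_iff_pow_eq_one.1 hm
  refine ⟨n, hn.ne', m, (mem_fixingSubgroup_iff _).2 fun u hu => ?_⟩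
  have hfix : (g ^ n) w = w := Equiv.Perm.pow_apply_eq_self_of_apply_eq_self hw n
  refine IsTreeAut.eq_of_restrictPerm_eq (h := 1) ((treeAut X).pow_mem (hG hg) n)
    (treeAut X).one_mem (by rw [hfix, Equiv.Perm.one_apply]) ?_ hu
  have hone := (hG hg).restrictPerm_pow (m := m) hw 0
  rw [pow_zero, pow_zero] at hone
  rw [(hG hg).restrictPerm_pow hw, hpow, hone]

theorem exists_fixingSubgroup_cylinder_ne_bot (hG : G ≤ treeAut X) (hN : IsContractingWith G N)
    (hF : F ≤ G) [IsMulTorsionFree F] {w : ℕ → X} (hw : stabilizer F w ≠ ⊥) :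
    ∃ m, fixingSubgroup F (cylinder w m) ≠ ⊥ := by
  obtain ⟨g, hgw, hg⟩ := (stabilizer F w).bot_or_exists_ne_one.resolve_left hw
  obtain ⟨n, hn, m, hm⟩ := hN.exists_pow_mem_fixingSubgroup hG (hF g.2) hgw
  have hmem : g ^ n ∈ fixingSubgroup F (cylinder w m) :=
    (mem_fixingSubgroup_iff _).2 ((mem_fixingSubgroup_iff _).1 hm)
  exact ⟨m, fun hbot => hg ((pow_eq_one_iff_left hn).1 ((eq_bot_iff_forall _).1 hbot _ hmem))⟩

theorem exists_depth_list_prod (hG : G ≤ treeAut X) (hN : IsContractingWith G N)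
    {s : Set (Equiv.Perm (ℕ → X))} (hs : s.Finite) (hsG : s ⊆ G) :
    ∃ m, ∀ (k : ℕ) (l : List (Equiv.Perm (ℕ → X))), l.length = 2 ^ k → (∀ g ∈ l, g ∈ s) →
      ∀ w, restrictPerm l.prod (wtake (k * m) w) ∈ s ∪ N := by
  have hfin : (s ∪ N).Finite := hs.union N.finite_toSet
  have hsNG : s ∪ N ⊆ G := Set.union_subset hsG hN.1
  obtain ⟨m, hm⟩ := hN.exists_depth (hfin.mul hfin)
    (Set.mul_subset_iff.2 fun g hg h hh => G.mul_mem (hsNG hg) (hsNG hh))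
  have hprod : ∀ l : List (Equiv.Perm (ℕ → X)), (∀ g ∈ l, g ∈ s) → IsTreeAut l.prod :=
    fun l hl => hG (G.list_prod_mem fun g hg => hsG (hl g hg))
  -- Each doubling of the length costs `m` levels: they bring a product of two elements of
  -- `s ∪ N` back into `N`.
  refine ⟨m, fun k => ?_⟩
  induction k with
  | zero =>
    intro l hlen hl w
    obtain ⟨g, rfl⟩ := List.length_eq_one_iff.1 (by simpa using hlen)
    rw [Nat.zero_mul, (hprod _ hl).restrictPerm_zero]
    simpa using Or.inl (hl g (by simp))
  | succ k ih =>
    intro l hlen hl w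
    obtain ⟨l₁, l₂, rfl, hlen₁, hlen₂⟩ : ∃ l₁ l₂, l = l₁ ++ l₂ ∧ l₁.length = 2 ^ k ∧
        l₂.length = 2 ^ k :=
      ⟨l.take (2 ^ k), l.drop (2 ^ k), by simp, by simp [hlen, pow_succ],
        by rw [List.length_drop, hlen, pow_succ]; lia⟩
    have hl₁ : ∀ g ∈ l₁, g ∈ s := fun g hg => hl g (List.mem_append_left _ hg)
    have hl₂ : ∀ g ∈ l₂, g ∈ s := fun g hg => hl g (List.mem_append_right _ hg)
    rw [Nat.succ_mul, (hprod _ hl).restrictPerm_add, List.prod_append,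
      (hprod _ hl₁).restrictPerm_mul (hprod _ hl₂)]
    exact Or.inr (hm _ (Set.mul_mem_mul (ih l₁ hlen₁ hl₁ _) (ih l₂ hlen₂ hl₂ w)) _)

theorem exists_ne_list_prod_apply_eq [Finite X] (hG : G ≤ treeAut X) (hN : IsContractingWith G N)
    {ι : Type*} [Finite ι] [Nontrivial ι] {f : ι → Equiv.Perm (ℕ → X)} (hf : ∀ i, f i ∈ G)
    (w : ℕ → X) : ∃ l l' : List ι, l ≠ l' ∧ (l.map f).prod w = (l'.map f).prod w := by
  obtain ⟨m, hm⟩ := hN.exists_depth_list_prod hG (Set.finite_range f) (Set.range_subset_iff.2 hf)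
  have : Finite (Set.range f ∪ N : Set _) := (Set.finite_range f).union N.finite_toSet
  obtain ⟨k, hk⟩ := exists_pow_mul_lt_pow_two_pow (Nat.card (Set.range f ∪ N : Set _))
    (Nat.card X) m (Finite.one_lt_card (α := ι))
  let p : (Fin (2 ^ k) → ι) → Equiv.Perm (ℕ → X) := fun a => ((List.ofFn a).map f).prod
  have hp : ∀ a, IsTreeAut (p a) := fun a => hG (G.list_prod_mem (by simp [hf]))
  have hres : ∀ a, restrictPerm (p a) (wtake (k * m) w) ∈ Set.range f ∪ N := fun a =>
    hm k _ (by simp) (by simp) w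
  let Φ : (Fin (2 ^ k) → ι) → (Fin (k * m) → X) × (Set.range f ∪ N : Set _) := fun a =>
    (wtake (k * m) (p a w), ⟨_, hres a⟩)
  have hΦ : ¬ Function.Injective Φ := fun hinj => by
    have hcard := Nat.card_le_card_of_injective Φ hinj
    rw [Nat.card_prod, Nat.card_fun, Nat.card_fun, Nat.card_fin, Nat.card_fin] at hcard
    exact hcard.not_gt hk
  obtain ⟨a, b, hab, hne⟩ := Function.not_injective_iff.1 hΦ
  obtain ⟨htake, hrestrict⟩ := Prod.ext_iff.1 hab
  exact ⟨List.ofFn a, List.ofFn b, List.ofFn_injective.ne hne,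
    (hp a).eq_of_restrictPerm_eq (hp b) htake (congrArg Subtype.val hrestrict)
      (self_mem_cylinder w _)⟩

theorem stabilizer_ne_bot [Finite X] (hG : G ≤ treeAut X) (hN : IsContractingWith G N)
    (hF : F ≤ G) {ι : Type*} [Finite ι] [Nontrivial ι] {f : ι → F}
    (hf : Function.Injective fun l : List ι => (l.map f).prod) (w : ℕ → X) :
    stabilizer F w ≠ ⊥ := by
  obtain ⟨l, l', hne, heq⟩ := hN.exists_ne_list_prod_apply_eq hG
    (f := F.subtype ∘ f) (fun i => hF (f i).2) w
  rw [← List.map_map, ← List.map_map, ← map_list_prod, ← map_list_prod] at heq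
  have hmem : ((l'.map f).prod)⁻¹ * (l.map f).prod ∈ stabilizer F w := by
    rw [mem_stabilizer_iff, mul_smul, inv_smul_eq_iff]
    exact heq
  exact fun hbot =>
    hne (hf (inv_mul_eq_one.1 ((eq_bot_iff_forall _).1 hbot _ hmem)).symm)

theorem exists_stabilizer_eq_bot [Finite X] (hG : G ≤ treeAut X) (hN : IsContractingWith G N)
    (hF : F ≤ G) [IsFreeGroup F] [Nontrivial F] : ∃ w : ℕ → X, stabilizer F w = ⊥ := by
  by_contra! hstab
  have := isMulTorsionFree_of_isFreeGroup F
  choose m hm using fun w => hN.exists_fixingSubgroup_cylinder_ne_bot hG hF (hstab w)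
  obtain ⟨t, ht⟩ := exists_finset_iUnion_cylinder_eq_univ m
  refine fixingSubgroup_iUnion_ne_bot (G := F) (U := fun w : t => cylinder (w : ℕ → X) (m w))
    (fun w => finite_orbit_cylinder (hF.trans hG) w (m w)) (fun w => hm w) ?_
  rw [ht, fixingSubgroup_univ_eq_bot]

end IsContractingWith

theorem stmt_6_general {X α : Type*} [Finite X] [Nontrivial α]
    {G : Subgroup (Equiv.Perm (ℕ → X))} (hG : G ≤ treeAut X)
    {N : Finset (Equiv.Perm (ℕ → X))} (hN : IsContractingWith G N) (φ : FreeGroup α →* G) :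
    ¬ Function.Injective φ := by
  intro hφ
  obtain ⟨i, j, hij⟩ := exists_pair_ne α
  let ψ : FreeGroup α →* Equiv.Perm (ℕ → X) := G.subtype.comp φ
  have hψ : Function.Injective ψ := G.subtype_injective.comp hφ
  let e : FreeGroup α ≃* ψ.range := MonoidHom.ofInjective hψ
  have hF : ψ.range ≤ G := by
    rintro _ ⟨x, rfl⟩
    exact (φ x).2
  have : IsFreeGroup ψ.range := IsFreeGroup.ofMulEquiv e
  have : Nontrivial ψ.range := e.symm.toEquiv.nontrivial
  obtain ⟨w, hw⟩ := hN.exists_stabilizer_eq_bot hG hF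
  refine hN.stabilizer_ne_bot hG hF (f := fun b : Bool => e (FreeGroup.of (cond b i j))) ?_ w hw
  have hmap : Function.Injective fun b => cond b i j := by
    simp [Bool.injective_iff, hij.symm]
  convert (e.injective.comp (injective_prod_map_freeGroup_of α)).comp
    (List.map_injective_iff.2 hmap) using 2 with l
  simp [map_list_prod, Function.comp_def]

end Contracting

/-- **Theorem `th:contracting`.** Contracting self-similar groups
`G ≤ Aut X^*` have no free non-abelian subgroups: there is no injective homomorphism from
the free group of rank 2 into `G`. -/
theorem stmt_6 (X : Type*) [Fintype X] [Nonempty X]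
    (G : Subgroup (Equiv.Perm (ℕ → X))) (hG : G ≤ treeAut X) (hss : SelfSimilar G)
    (hc : ∃ N : Finset (Equiv.Perm (ℕ → X)), IsContractingWith G N)
    (φ : FreeGroup (Fin 2) →* G) :
    ¬ Function.Injective φ := by
  obtain ⟨N, hN⟩ := hc
  exact stmt_6_general hG hN φ
end

section
/- Let X be a finite set and d ≥ -1. For every g ∈ P_d(X) the set Σ_g of g-singular points of X^ω is at most countable. -/
/-- The restriction `f|_v` is trivial: `f` maps `v·u` to `(f v)·u` for every `u`. -/
def RestrictTrivial {X : Type*} (f : Equiv.Perm (ℕ → X)) {m : ℕ} (v : Fin m → X) : Prop :=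
  ∀ u : ℕ → X, (∀ i : Fin m, u i = v i) → ∀ i, m ≤ i → f u i = u i

/-- The growth function `θ_f(n) = |{v ∈ X^n : f|_v ≠ id}|` of `f`. -/
noncomputable def thetaGrowth {X : Type*} (f : Equiv.Perm (ℕ → X)) (n : ℕ) : ℕ :=
  {v : Fin n → X | ¬ RestrictTrivial f v}.ncard

/-- `f` is finite-state: it has only finitely many restrictions `f|_v`, `v ∈ X^*`. -/
def FiniteState {X : Type*} (f : Equiv.Perm (ℕ → X)) : Prop :=
  {h : Equiv.Perm (ℕ → X) | ∃ (m : ℕ) (v : Fin m → X), restrictPerm f v = h}.Finite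

/-- `f` is finitary: for some `n`, `f|_v = id` for all words `v` of length `n`. -/
def IsFinitary {X : Type*} (f : Equiv.Perm (ℕ → X)) : Prop :=
  ∃ n : ℕ, ∀ u : ℕ → X, ∀ i, n ≤ i → f u i = u i

/-- Membership in Sidki's group `P_d(X)`, for `d ≥ -1`: for `d = -1`, the finitary
automorphisms of `X^*`; for `d ≥ 0`, the finite-state automorphisms of `X^*` whose growth
function `θ` is bounded above by a polynomial of degree `d`. -/
def MemP {X : Type*} (d : ℤ) (f : Equiv.Perm (ℕ → X)) : Prop :=
  IsTreeAut f ∧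
    ((d = -1 ∧ IsFinitary f) ∨
      (0 ≤ d ∧ FiniteState f ∧
        ∃ p : Polynomial ℕ, (p.natDegree : ℤ) ≤ d ∧ ∀ n, thetaGrowth f n ≤ p.eval n))

/-- The set `Σ_f` of `f`-singular points of `X^ω`: points none of whose beginnings `v`
satisfy `f|_v = id`. -/
def singularSet {X : Type*} (f : Equiv.Perm (ℕ → X)) : Set (ℕ → X) :=
  {w | ∀ m : ℕ, ¬ RestrictTrivial f (fun i : Fin m => w i)}

/-! The sections of a finite-state automorphism `g` are the states of a finite automaton, so the
words `v` with `g|_v ≠ id` form a regular language `L`, and `Σ_g` is the set of infinite words all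
of whose beginnings lie in `L`.  Along such a word `w` some left quotient of `L` recurs infinitely
often; mark a beginning `v` of `w` where it occurs.  If `p` and `q` both lead from `v` back to the
left quotient at `v`, then so do `pq` and `qp`, and were these two words different, their products
would give `2 ^ k` words of `L` of length `|v| + k |pq|`, contrary to subexponential growth.  Hence
`pq = qp`, so one of `p` and `q` is a beginning of the other.  As `p` and `q` may be arbitrarily
long, two infinite words with the same marked beginning coincide, and there are only countably many
finite words. -/

section SubexponentialGrowth

open Filter Asymptotics

/-- A sequence of natural numbers has subexponential growth if it is negligible compared with every
exponential `c ^ n`, `c > 1`. -/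
def HasSubexponentialGrowth (a : ℕ → ℕ) : Prop :=
  ∀ c : ℝ, 1 < c → (fun n => (a n : ℝ)) =o[atTop] fun n => c ^ n

variable {a b : ℕ → ℕ}

theorem HasSubexponentialGrowth.mono (hb : HasSubexponentialGrowth b) (h : a ≤ᶠ[atTop] b) :
    HasSubexponentialGrowth a := fun c hc =>
  (IsBigO.of_bound' (h.mono fun n hn => by simpa using hn)).trans_isLittleO (hb c hc)

theorem HasSubexponentialGrowth.comp_affine (ha : HasSubexponentialGrowth a) (m : ℕ) {d : ℕ}
    (hd : d ≠ 0) : HasSubexponentialGrowth fun k => a (m + k * d) := by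
  intro c hc
  set r : ℝ := c ^ (d⁻¹ : ℝ)
  have hrd : r ^ d = c := Real.rpow_inv_natCast_pow (by linarith) hd
  have hr : 1 < r := Real.one_lt_rpow hc (by positivity)
  have htendsto : Tendsto (fun k => m + k * d) atTop atTop :=
    tendsto_atTop_mono (fun k => (Nat.le_mul_of_pos_right k hd.bot_lt).trans (Nat.le_add_left _ m))
      tendsto_id
  have h := (ha r hr).comp_tendsto htendsto
  have hpow : ((fun n => r ^ n) ∘ fun k => m + k * d) = fun k => r ^ m * c ^ k := by
    funext k
    simp only [Function.comp_apply, pow_add, mul_comm k, pow_mul, hrd]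
  exact (hpow ▸ h).of_const_mul_right

theorem HasSubexponentialGrowth.exists_lt_pow (ha : HasSubexponentialGrowth a) {c : ℕ}
    (hc : 1 < c) : ∃ n, a n < c ^ n := by
  obtain ⟨n, hn⟩ := ((ha c (mod_cast hc)).bound one_half_pos).exists
  have hpos : (0 : ℝ) < (c : ℝ) ^ n := by positivity
  rw [Real.norm_natCast, Real.norm_of_nonneg hpos.le] at hn
  have hlt : (a n : ℝ) < (c : ℝ) ^ n := by linarith
  exact ⟨n, mod_cast hlt⟩

theorem isLittleO_eval_natCast_const_pow {R : Type*} [NormedRing R] (P : Polynomial R) {c : ℝ}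
    (hc : 1 < c) : (fun n : ℕ => P.eval (n : R)) =o[atTop] fun n => c ^ n := by
  induction P using Polynomial.induction_on' with
  | add P Q hP hQ => simpa only [Polynomial.eval_add] using hP.add hQ
  | monomial k r =>
    simpa only [Polynomial.eval_monomial] using
      (isLittleO_pow_const_const_pow_of_one_lt k hc).const_mul_left r

theorem hasSubexponentialGrowth_eval (P : Polynomial ℕ) :
    HasSubexponentialGrowth fun n => P.eval n := by
  intro c hc
  have h := isLittleO_eval_natCast_const_pow (P.map (Nat.castRingHom ℝ)) hc
  simpa only [Polynomial.eval_natCast_map, eq_natCast, Nat.cast_id] using h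

end SubexponentialGrowth

section Language

variable {α : Type*}

/-- The beginning of length `n` of an infinite word, as a list in order to speak of languages. -/
def beginning (w : ℕ → α) (n : ℕ) : List α :=
  List.ofFn fun i : Fin n => w i

theorem beginning_prefix_beginning (w : ℕ → α) {m n : ℕ} (h : m ≤ n) :
    beginning w m <+: beginning w n := by
  simp only [List.prefix_iff_getElem, beginning, List.length_ofFn, List.getElem_ofFn]
  exact ⟨h, fun _ _ => trivial⟩

theorem eq_of_beginning_append_eq {w w' : ℕ → α} {m n i : ℕ} {p q : List α}
    (h : beginning w m ++ p = beginning w' n ++ q) (hm : i < m) (hn : i < n) : w i = w' i := by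
  have hi : (beginning w m ++ p)[i]? = (beginning w' n ++ q)[i]? := by rw [h]
  simpa [beginning, List.getElem?_append_left, hm, hn] using hi

/-- The growth function of a language: the number of its words of length `n`.  It is meaningful for
a finite alphabet only, since `Set.ncard` is `0` on infinite sets. -/
noncomputable def wordGrowth (L : Language α) (n : ℕ) : ℕ :=
  {l : List α | l ∈ L ∧ l.length = n}.ncard

/-- The infinite words all of whose beginnings lie in `L`, that is, the infinite branches of `L`
when it is closed under beginnings. -/
def branches (L : Language α) : Set (ℕ → α) :=
  {w | ∀ n, beginning w n ∈ L}

variable {L : Language α}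

section Growth

variable [Finite α]

theorem finite_setOf_mem_and_length_eq (L : Language α) (n : ℕ) :
    {l : List α | l ∈ L ∧ l.length = n}.Finite :=
  (List.finite_length_eq α n).subset fun _ hl => hl.2

theorem wordGrowth_leftQuotient_le (L : Language α) (v : List α) (n : ℕ) :
    wordGrowth (L.leftQuotient v) n ≤ wordGrowth L (v.length + n) := by
  refine Set.ncard_le_ncard_of_injOn (v ++ ·) ?_ (List.append_right_injective v).injOn
    (finite_setOf_mem_and_length_eq L _)
  rintro l ⟨hl, rfl⟩
  exact ⟨hl, List.length_append⟩

theorem wordGrowth_leftQuotient_add_le (L : Language α) {p q : List α} (hne : p ≠ q)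
    (hlen : p.length = q.length) (n : ℕ) :
    wordGrowth (L.leftQuotient p) n + wordGrowth (L.leftQuotient q) n ≤
      wordGrowth L (p.length + n) := by
  have hdisj : Disjoint ((p ++ ·) '' {l | l ∈ L.leftQuotient p ∧ l.length = n})
      ((q ++ ·) '' {l | l ∈ L.leftQuotient q ∧ l.length = n}) := by
    rw [Set.disjoint_left]
    rintro _ ⟨l, -, rfl⟩ ⟨l', -, h⟩
    exact hne (List.append_inj_left h hlen.symm).symm
  have hcard (v : List α) : ((v ++ ·) '' {l | l ∈ L.leftQuotient v ∧ l.length = n}).ncard =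
      wordGrowth (L.leftQuotient v) n :=
    Set.ncard_image_of_injective _ (List.append_right_injective v)
  rw [← hcard p, ← hcard q,
    ← Set.ncard_union_eq hdisj ((finite_setOf_mem_and_length_eq _ n).image _)
      ((finite_setOf_mem_and_length_eq _ n).image _)]
  refine Set.ncard_le_ncard ?_ (finite_setOf_mem_and_length_eq L _)
  rintro _ (⟨l, ⟨hl, rfl⟩, rfl⟩ | ⟨l, ⟨hl, rfl⟩, rfl⟩)
  · exact ⟨hl, List.length_append⟩
  · exact ⟨hl, by rw [hlen, List.length_append]⟩

theorem two_pow_le_wordGrowth (hnil : [] ∈ L) {p q : List α} (hne : p ≠ q)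
    (hlen : p.length = q.length) (hp : L.leftQuotient p = L) (hq : L.leftQuotient q = L) (k : ℕ) :
    2 ^ k ≤ wordGrowth L (k * p.length) := by
  induction k with
  | zero =>
    rw [pow_zero, zero_mul, Nat.one_le_iff_ne_zero]
    exact (Set.ncard_pos (finite_setOf_mem_and_length_eq L 0)).2 ⟨[], hnil, rfl⟩ |>.ne'
  | succ k ih =>
    calc 2 ^ (k + 1) = 2 ^ k + 2 ^ k := by ring
      _ ≤ wordGrowth (L.leftQuotient p) (k * p.length) +
          wordGrowth (L.leftQuotient q) (k * p.length) := by rw [hp, hq]; exact add_le_add ih ih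
      _ ≤ wordGrowth L (p.length + k * p.length) := wordGrowth_leftQuotient_add_le L hne hlen _
      _ = wordGrowth L ((k + 1) * p.length) := by congr 1; ring

theorem append_comm_of_leftQuotient_eq (hL : HasSubexponentialGrowth (wordGrowth L))
    {v p q : List α} (hv : v ∈ L) (hp : L.leftQuotient (v ++ p) = L.leftQuotient v)
    (hq : L.leftQuotient (v ++ q) = L.leftQuotient v) : p ++ q = q ++ p := by
  by_contra hne
  have hlength : (p ++ q).length ≠ 0 := by
    intro h
    obtain ⟨rfl, rfl⟩ := List.append_eq_nil_iff.1 (List.length_eq_zero_iff.1 h)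
    exact hne rfl
  obtain ⟨k, hk⟩ := (hL.comp_affine v.length hlength).exists_lt_pow one_lt_two
  rw [Language.leftQuotient_append] at hp hq
  have hle : 2 ^ k ≤ wordGrowth (L.leftQuotient v) (k * (p ++ q).length) :=
    two_pow_le_wordGrowth (by simpa using hv) hne (by simp [add_comm])
      (by rw [Language.leftQuotient_append, hp, hq])
      (by rw [Language.leftQuotient_append, hq, hp]) k
  exact (hle.trans (wordGrowth_leftQuotient_le L v _)).not_gt hk

end Growth

theorem exists_infinite_leftQuotient_beginning_eq (hL : L.IsRegular) (w : ℕ → α) :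
    ∃ m, {n | L.leftQuotient (beginning w n) = L.leftQuotient (beginning w m)}.Infinite := by
  have := hL.finite_range_leftQuotient.to_subtype
  obtain ⟨⟨_, l, rfl⟩, hl⟩ := Finite.exists_infinite_fiber
    fun n => (⟨L.leftQuotient (beginning w n), Set.mem_range_self _⟩ : Set.range L.leftQuotient)
  rw [Set.infinite_coe_iff] at hl
  obtain ⟨m, hm⟩ := hl.nonempty
  refine ⟨m, hl.mono fun n hn => ?_⟩
  exact (Subtype.ext_iff.1 hn).trans (Subtype.ext_iff.1 hm).symm

theorem countable_branches [Finite α] (hreg : L.IsRegular)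
    (hL : HasSubexponentialGrowth (wordGrowth L)) : (branches L).Countable := by
  choose m hm using exists_infinite_leftQuotient_beginning_eq hreg
  refine (Set.mapsTo_univ (fun w => beginning w (m w)) _).countable_of_injOn ?_ Set.countable_univ
  intro w hw w' _ (heq : beginning w (m w) = beginning w' (m w'))
  refine funext fun i => ?_
  obtain ⟨n, hn, hlt⟩ := (hm w).exists_gt (max i (m w))
  obtain ⟨n', hn', hlt'⟩ := (hm w').exists_gt (max i (m w'))
  obtain ⟨hi, hmn⟩ := max_lt_iff.1 hlt
  obtain ⟨hi', hmn'⟩ := max_lt_iff.1 hlt'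
  obtain ⟨p, hp⟩ := beginning_prefix_beginning w hmn.le
  obtain ⟨q, hq⟩ := beginning_prefix_beginning w' hmn'.le
  rw [Set.mem_ofPred_eq, ← hp] at hn
  rw [Set.mem_ofPred_eq, ← hq, ← heq] at hn'
  have hcomm : p ++ q = q ++ p := append_comm_of_leftQuotient_eq hL (hw _) hn hn'
  have happend : beginning w n ++ q = beginning w' n' ++ p := by
    rw [← hp, ← hq, ← heq, List.append_assoc, hcomm, List.append_assoc]
  exact eq_of_beginning_append_eq happend hi hi'

end Language

section Sections

variable {X : Type*}

theorem wappend_add {m : ℕ} (v : Fin m → X) (u : ℕ → X) (j : ℕ) : wappend v u (m + j) = u j := by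
  simp [wappend]

theorem wappend_shift_of_agree {m : ℕ} {v : Fin m → X} {u : ℕ → X} (h : ∀ i : Fin m, u i = v i) :
    wappend v (fun j => u (m + j)) = u := by
  funext i
  rcases lt_or_ge i m with hi | hi
  · rw [wappend, dif_pos hi, h ⟨i, hi⟩]
  · obtain ⟨j, rfl⟩ := Nat.exists_eq_add_of_le hi
    exact wappend_add v _ j

theorem wappend_get_ofFn {m : ℕ} (v : Fin m → X) (u : ℕ → X) :
    wappend (List.ofFn v).get u = wappend v u := by
  funext i
  simp [wappend]

theorem wappend_get_append (l l' : List X) (u : ℕ → X) :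
    wappend (l ++ l').get u = wappend l.get (wappend l'.get u) := by
  funext i
  rcases lt_or_ge i l.length with hi | hi
  · simp [wappend, hi, Nat.lt_add_right]
  · obtain ⟨j, rfl⟩ := Nat.exists_eq_add_of_le hi
    simp [wappend, Nat.add_sub_add_left]

/-- The section of a self-map `F` of `X^ω` at a finite word.  It extends `restrictFun` to maps that
need not be bijective, and takes words as lists, so that sections can be iterated. -/
def sectionAt (F : (ℕ → X) → (ℕ → X)) (l : List X) : (ℕ → X) → (ℕ → X) :=
  fun u j => F (wappend l.get u) (l.length + j)

/-- The words at which the section of `F` is nontrivial. -/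
def singularLanguage (F : (ℕ → X) → (ℕ → X)) : Language X :=
  {l | sectionAt F l ≠ id}

theorem sectionAt_append (F : (ℕ → X) → (ℕ → X)) (l l' : List X) :
    sectionAt F (l ++ l') = sectionAt (sectionAt F l) l' := by
  funext u j
  simp only [sectionAt, wappend_get_append, List.length_append, add_assoc]

theorem leftQuotient_singularLanguage (F : (ℕ → X) → (ℕ → X)) (l : List X) :
    (singularLanguage F).leftQuotient l = singularLanguage (sectionAt F l) := by
  ext l'
  change sectionAt F (l ++ l') ≠ id ↔ sectionAt (sectionAt F l) l' ≠ id
  rw [sectionAt_append]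

theorem isRegular_singularLanguage {F : (ℕ → X) → (ℕ → X)}
    (hF : (Set.range (sectionAt F)).Finite) : (singularLanguage F).IsRegular := by
  refine .of_finite_range_leftQuotient ?_
  rw [funext (leftQuotient_singularLanguage F)]
  exact (Set.range_comp singularLanguage (sectionAt F)).symm ▸ hF.image singularLanguage

end Sections

section Restrictions

variable {X : Type*} {f : Equiv.Perm (ℕ → X)}

theorem restrictFun_eq_sectionAt (f : Equiv.Perm (ℕ → X)) {m : ℕ} (v : Fin m → X) :
    restrictFun f v = sectionAt f (List.ofFn v) := by
  funext u j
  rw [restrictFun, sectionAt, wappend_get_ofFn, List.length_ofFn]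

theorem restrictTrivial_iff_restrictFun_eq_id (f : Equiv.Perm (ℕ → X)) {m : ℕ} (v : Fin m → X) :
    RestrictTrivial f v ↔ restrictFun f v = id := by
  constructor
  · intro h
    funext u j
    rw [restrictFun, h _ (fun i => by simp [wappend]) _ (Nat.le_add_right m j), wappend_add, id]
  · intro h u hu i hi
    obtain ⟨j, rfl⟩ := Nat.exists_eq_add_of_le hi
    have hj := congrFun (congrFun h fun j => u (m + j)) j
    rwa [restrictFun, wappend_shift_of_agree hu] at hj

theorem ofFn_mem_singularLanguage (f : Equiv.Perm (ℕ → X)) {m : ℕ} (v : Fin m → X) :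
    List.ofFn v ∈ singularLanguage f ↔ ¬ RestrictTrivial f v := by
  rw [restrictTrivial_iff_restrictFun_eq_id, restrictFun_eq_sectionAt]
  rfl

theorem singularSet_eq_branches (f : Equiv.Perm (ℕ → X)) :
    singularSet f = branches (singularLanguage f) := by
  ext w
  exact forall_congr' fun n => (ofFn_mem_singularLanguage f _).symm

theorem thetaGrowth_eq_wordGrowth (f : Equiv.Perm (ℕ → X)) :
    thetaGrowth f = wordGrowth (singularLanguage f) := by
  funext n
  rw [thetaGrowth, wordGrowth, ← Set.ncard_image_of_injective _ List.ofFn_injective]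
  congr 1
  ext l
  constructor
  · rintro ⟨v, hv, rfl⟩
    exact ⟨(ofFn_mem_singularLanguage f v).2 hv, List.length_ofFn⟩
  · rintro ⟨hl, rfl⟩
    rw [← List.ofFn_get l, ofFn_mem_singularLanguage] at hl
    exact ⟨l.get, hl, List.ofFn_get l⟩

theorem IsTreeAut.restrictFun_injective (hf : IsTreeAut f) {m : ℕ} (v : Fin m → X) :
    Function.Injective (restrictFun f v) := by
  intro u u' h
  have hagree : ∀ i, i < m → f (wappend v u) i = f (wappend v u') i :=
    (hf m _ _).1 fun i hi => by simp [wappend, hi]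
  have himage : f (wappend v u) = f (wappend v u') := by
    funext i
    rcases lt_or_ge i m with hi | hi
    · exact hagree i hi
    · obtain ⟨j, rfl⟩ := Nat.exists_eq_add_of_le hi
      exact congrFun h j
  funext j
  rw [← wappend_add v u j, f.injective himage, wappend_add]

theorem IsTreeAut.restrictFun_surjective (hf : IsTreeAut f) {m : ℕ} (v : Fin m → X) :
    Function.Surjective (restrictFun f v) := by
  intro y
  let t : ℕ → X := wappend (fun i : Fin m => f (wappend v y) i) y
  have hagree : ∀ i, i < m → f.symm t i = wappend v y i :=
    (hf m _ _).2 fun i hi => by simp [t, wappend, hi]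
  have hbeginning : ∀ i : Fin m, f.symm t i = v i := fun i => by simp [hagree i i.2, wappend]
  refine ⟨fun j => f.symm t (m + j), funext fun j => ?_⟩
  rw [restrictFun, wappend_shift_of_agree hbeginning, f.apply_symm_apply]
  exact wappend_add _ y j

theorem IsTreeAut.coe_restrictPerm (hf : IsTreeAut f) {m : ℕ} (v : Fin m → X) :
    ⇑(restrictPerm f v) = restrictFun f v := by
  have hbij : Function.Bijective (restrictFun f v) :=
    ⟨hf.restrictFun_injective v, hf.restrictFun_surjective v⟩
  rw [restrictPerm, dif_pos hbij, Equiv.coe_ofBijective]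

theorem FiniteState.finite_range_sectionAt (hfs : FiniteState f) (hf : IsTreeAut f) :
    (Set.range (sectionAt f)).Finite := by
  refine (hfs.image fun h : Equiv.Perm (ℕ → X) => (h : (ℕ → X) → (ℕ → X))).subset ?_
  rintro _ ⟨l, rfl⟩
  exact ⟨restrictPerm f l.get, ⟨_, _, rfl⟩, hf.coe_restrictPerm l.get⟩

theorem RestrictTrivial.restrictPerm_eq_one {m : ℕ} {v : Fin m → X} (h : RestrictTrivial f v) :
    restrictPerm f v = 1 := by
  have hid := (restrictTrivial_iff_restrictFun_eq_id f v).1 h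
  rw [restrictPerm, dif_pos (hid ▸ Function.bijective_id)]
  exact Equiv.coe_fn_injective hid

theorem IsFinitary.exists_forall_restrictTrivial (hf : IsFinitary f) :
    ∃ n, ∀ m, n ≤ m → ∀ v : Fin m → X, RestrictTrivial f v :=
  hf.imp fun _ hn _ hm _ u _ i hi => hn u i (hm.trans hi)

theorem IsFinitary.finiteState [Finite X] (hf : IsFinitary f) : FiniteState f := by
  obtain ⟨n, hn⟩ := hf.exists_forall_restrictTrivial
  have hfinite : (⋃ m : Fin n, Set.range fun v : Fin m → X => restrictPerm f v).Finite :=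
    Set.finite_iUnion fun _ => Set.finite_range _
  refine (hfinite.insert 1).subset ?_
  rintro _ ⟨m, v, rfl⟩
  rcases lt_or_ge m n with hm | hm
  · exact .inr (Set.mem_iUnion.2 ⟨⟨m, hm⟩, v, rfl⟩)
  · exact .inl (hn m hm v).restrictPerm_eq_one

theorem IsFinitary.eventually_thetaGrowth_eq_zero (hf : IsFinitary f) :
    ∀ᶠ n in Filter.atTop, thetaGrowth f n = 0 := by
  obtain ⟨n, hn⟩ := hf.exists_forall_restrictTrivial
  filter_upwards [Filter.eventually_ge_atTop n] with m hm
  simp [thetaGrowth, hn m hm]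

variable {d : ℤ}

theorem MemP.finiteState [Finite X] (hf : MemP d f) : FiniteState f := by
  obtain ⟨-, ⟨-, hfin⟩ | ⟨-, hfs, -⟩⟩ := hf
  exacts [hfin.finiteState, hfs]

theorem MemP.hasSubexponentialGrowth (hf : MemP d f) :
    HasSubexponentialGrowth (thetaGrowth f) := by
  obtain ⟨-, ⟨-, hfin⟩ | ⟨-, -, P, -, hP⟩⟩ := hf
  · exact (hasSubexponentialGrowth_eval 0).mono
      (hfin.eventually_thetaGrowth_eq_zero.mono fun n hn => by simp [hn])
  · exact (hasSubexponentialGrowth_eval P).mono (.of_forall hP)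

end Restrictions

theorem stmt_12_general {X : Type*} [Finite X] {g : Equiv.Perm (ℕ → X)} (htree : IsTreeAut g)
    (hfs : FiniteState g) (hg : HasSubexponentialGrowth (thetaGrowth g)) :
    (singularSet g).Countable := by
  rw [thetaGrowth_eq_wordGrowth] at hg
  rw [singularSet_eq_branches]
  exact countable_branches (isRegular_singularLanguage (hfs.finite_range_sectionAt htree)) hg

/-- Let `X` be a finite set and `d ≥ -1`. For every `g ∈ P_d(X)` the set
`Σ_g` of `g`-singular points of `X^ω` is at most countable. -/
theorem stmt_12 (X : Type*) [Fintype X] [Nonempty X] (d : ℤ) (hd : -1 ≤ d)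
    (g : Equiv.Perm (ℕ → X)) (hg : MemP d g) :
    (singularSet g).Countable :=
  stmt_12_general hg.1 hg.finiteState hg.hasSubexponentialGrowth
end
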